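/- Let (X_i)_{i≥1} be i.i.d. standard normal and X_{(n)} = max_{1≤i≤n} X_i. Let a_n = √(2 log n), c_n = log(√(4π log n)), b_n = a_n - c_n/a_n - (c_n² - 2c_n)/(2a_n³), and Y_n = a_n(X_{(n)} - b_n). Then, as n → ∞, W₁(L(Y_n), Λ) = ((γ - 2 Ei(-1)) log log n/(4 log n))(1 + o(1)), where γ is the Euler–Mascheroni constant and Ei is the exponential integral function. -/

import Mathlib

open MeasureTheory Filter Real

/-- The standard normal cumulative distribution function. -/
noncomputable def stdNormalCDF (x : ℝ) : ℝ :=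
  ∫ t in Set.Iic x, Real.exp (-t ^ 2 / 2) / Real.sqrt (2 * Real.pi)

/-- The standard normal density. -/
noncomputable def stdNormalPDF (x : ℝ) : ℝ :=
  Real.exp (-x ^ 2 / 2) / Real.sqrt (2 * Real.pi)

/-- Scaling constant `a_n = √(2 log n)`. -/
noncomputable def aSeq (n : ℕ) : ℝ := Real.sqrt (2 * Real.log n)

/-- Centering constant
`b_n = √(2 log n) - (log log n + log (4π)) / (2 √(2 log n))`. -/
noncomputable def bSeq (n : ℕ) : ℝ :=
  aSeq n - (Real.log (Real.log n) + Real.log (4 * Real.pi)) / (2 * aSeq n)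

/-- `c_n = log (√(4 π log n))`. -/
noncomputable def cSeq (n : ℕ) : ℝ := Real.log (Real.sqrt (4 * Real.pi * Real.log n))

/-- The CDF of `Y_n = a_n (X_{(n)} - b_n)` where `X_{(n)}` is the maximum of `n`
i.i.d. standard normal random variables: `P(Y_n ≤ x) = Φ(b_n + x/a_n)^n`. -/
noncomputable def Fmax (n : ℕ) (x : ℝ) : ℝ := stdNormalCDF (bSeq n + x / aSeq n) ^ n

/-- The density of `Y_n = a_n (X_{(n)} - b_n)`:
`f_n(x) = n a_n⁻¹ φ(b_n + x/a_n) Φ(b_n + x/a_n)^{n-1}`. -/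
noncomputable def fmax (n : ℕ) (x : ℝ) : ℝ :=
  n * (aSeq n)⁻¹ * stdNormalPDF (bSeq n + x / aSeq n) *
    stdNormalCDF (bSeq n + x / aSeq n) ^ (n - 1)

/-- The density of the standard Gumbel distribution. -/
noncomputable def gumbelPDF (x : ℝ) : ℝ := Real.exp (-x - Real.exp (-x))

/-- Refined centering `b_n = a_n - c_n/a_n - (c_n² - 2c_n)/(2a_n³)`. -/
noncomputable def bSeq3 (n : ℕ) : ℝ :=
  aSeq n - cSeq n / aSeq n - ((cSeq n) ^ 2 - 2 * cSeq n) / (2 * (aSeq n) ^ 3)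

/-- The value `Ei(-1) = -∫_1^∞ e^{-t}/t dt` of the exponential integral. -/
noncomputable def EiNegOne : ℝ := -∫ t in Set.Ioi (1 : ℝ), Real.exp (-t) / t

/-!
Write `Φ(b_n + x / a_n) ^ n = Λ(x - H_n x)`, where `H_n x = log (-n log Φ(b_n + x / a_n)) + x`, and
let `τ_n = c_n / a_n ^ 2`. Mills' ratio gives `H_n x / τ_n → x` for each `x`.

If a density `exp (-V)` satisfies `0 ≤ V'' ≤ 1`, then so does its tail. Applied to `φ` this gives
the tail `1 - Φ`; since `φ / Φ` inherits the property by reflection, a second application gives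
`-log Φ`. Hence `H_n` is concave and `H_n + τ_n x ^ 2` is convex, so that convergence at the
three points `-1, 0, 1` already bounds `H_n / τ_n` by a quadratic on all of `ℝ`, while the
convexity of `exp (H_n x - x) = -n log Φ(b_n + x / a_n)` controls `Λ(x - H_n x)` as `x → -∞`.

Dominated convergence then gives `∫ |Λ(x - H_n x) - Λ(x)| dx / τ_n → ∫ |x| Λ'(x) dx`, which is
`γ - 2 Ei(-1)`, and `τ_n` is asymptotic to `log log n / (4 log n)`.
-/

section GumbelConvergence

open Set Topology ProbabilityTheory

/-! ### Concave functions controlled by three points -/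

lemma le_of_concaveOn_of_abs_le {f : ℝ → ℝ} {δ : ℝ} (hf : ConcaveOn ℝ univ f)
    (hneg : |f (-1)| ≤ δ) (hzero : |f 0| ≤ δ) (hone : |f 1| ≤ δ) (x : ℝ) :
    f x ≤ δ * (1 + 2 * |x|) := by
  have extrapolate {g : ℝ → ℝ} (hg : ConcaveOn ℝ univ g) {y : ℝ} (hy : 0 ≤ y) :
      g y ≤ (1 + y) * g 0 - y * g (-1) := by
    have hy1 : 0 < 1 + y := by linarith
    have h := hg.2 (mem_univ y) (mem_univ (-1)) (show 0 ≤ 1 / (1 + y) by positivity)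
      (show 0 ≤ y / (1 + y) by positivity) (by field_simp)
    simp only [smul_eq_mul] at h
    rw [show 1 / (1 + y) * y + y / (1 + y) * -1 = 0 by ring] at h
    field_simp at h
    linarith
  rw [abs_le] at hneg hzero hone
  rcases le_total 0 x with hx | hx
  · rw [abs_of_nonneg hx]
    have h := extrapolate hf hx
    nlinarith
  · rw [abs_of_nonpos hx]
    have h := extrapolate (hf.comp_linearMap (-LinearMap.id)) (neg_nonneg.2 hx)
    simp only [LinearMap.coe_neg, LinearMap.id_coe, Function.comp_apply, Pi.neg_apply, id_eq,
      neg_neg, neg_zero] at h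
    nlinarith

lemma abs_le_of_concaveOn_of_convexOn_add_sq {f : ℝ → ℝ} {t C : ℝ} (ht : 0 ≤ t)
    (hconc : ConcaveOn ℝ univ f) (hconv : ConvexOn ℝ univ fun x ↦ f x + t * x ^ 2)
    (hneg : |f (-1)| ≤ t * C) (hzero : |f 0| ≤ t * C) (hone : |f 1| ≤ t * C) (x : ℝ) :
    |f x| ≤ t * (C + 1) * (1 + |x|) ^ 2 := by
  have hC : 0 ≤ t * C := (abs_nonneg _).trans hzero
  have hupper := le_of_concaveOn_of_abs_le hconc hneg hzero hone x
  have parabola {y : ℝ} (hy : |f y| ≤ t * C) (hy1 : y ^ 2 ≤ 1) :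
      |-(f y + t * y ^ 2)| ≤ t * (C + 1) := by
    rw [abs_neg]
    refine (abs_add_le _ _).trans ?_
    rw [abs_of_nonneg (mul_nonneg ht (sq_nonneg y))]
    nlinarith
  have hlower := le_of_concaveOn_of_abs_le hconv.neg (parabola hneg (by norm_num))
    (parabola hzero (by norm_num)) (parabola hone (by norm_num)) x
  simp only [Pi.neg_apply, ← sq_abs x] at hlower
  have hx := abs_nonneg x
  rw [abs_le]
  constructor <;> nlinarith [mul_nonneg hC hx, mul_nonneg hC (sq_nonneg |x|), mul_nonneg ht hx,
    mul_nonneg ht (sq_nonneg |x|)]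

lemma mul_sub_le_of_convexOn_of_nonneg {p : ℝ → ℝ} {m y z : ℝ} (hp : ConvexOn ℝ univ p)
    (hnonneg : ∀ x, 0 ≤ p x) (hm : 0 ≤ m) (hyz : y < z) (hsecant : m * (z - y) ≤ p y - p z)
    (x : ℝ) : m * (y - x) ≤ p x := by
  rcases le_or_gt y x with hyx | hxy
  · nlinarith [hnonneg x]
  · have hslope := hp.slope_mono_adjacent (mem_univ x) (mem_univ z) hxy hyz
    rw [div_le_div_iff₀ (by linarith) (by linarith)] at hslope
    have hgap : m * (y - x) * (z - y) ≤ (p x - p y) * (z - y) := by nlinarith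
    linarith [le_of_mul_le_mul_right hgap (by linarith), hnonneg y]

/-! ### Perturbations of the Gumbel distribution -/

/-- The distribution function `Λ` of the standard Gumbel law. -/
noncomputable def gumbelCDF (x : ℝ) : ℝ := exp (-exp (-x))

lemma hasDerivAt_gumbelCDF (x : ℝ) : HasDerivAt gumbelCDF (gumbelPDF x) x := by
  have hderiv : HasDerivAt gumbelCDF (exp (-exp (-x)) * -(exp (-x) * -1)) x :=
    (hasDerivAt_neg x).exp.neg.exp
  convert hderiv using 1
  rw [gumbelPDF, sub_eq_add_neg, exp_add]
  ring

lemma continuous_gumbelCDF : Continuous gumbelCDF := by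
  unfold gumbelCDF
  fun_prop

lemma abs_exp_sub_exp_le {s t b : ℝ} (hs : s ≤ b) (ht : t ≤ b) :
    |exp s - exp t| ≤ |s - t| * exp b := by
  wlog hst : s ≤ t generalizing s t
  · rw [abs_sub_comm, abs_sub_comm s]
    exact this ht hs (le_of_not_ge hst)
  rw [abs_of_nonpos (by linarith [exp_le_exp.2 hst]), abs_of_nonpos (by linarith)]
  have htangent : exp t * (s - t + 1) ≤ exp s := by
    calc exp t * (s - t + 1) ≤ exp t * exp (s - t) := by gcongr; exact add_one_le_exp _
      _ = exp s := by rw [← exp_add]; congr 1; ring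
  nlinarith [exp_le_exp.2 ht]

lemma abs_gumbelCDF_sub_le {x h b m : ℝ} (hb : 0 ≤ b) (hh : h ≤ b) (hm : m ≤ exp (-x))
    (hmh : m ≤ exp (h - x)) :
    |gumbelCDF (x - h) - gumbelCDF x| ≤ |h| * exp (b - x - m) := by
  calc |gumbelCDF (x - h) - gumbelCDF x|
      ≤ |-exp (h - x) - -exp (-x)| * exp (-m) := by
        rw [gumbelCDF, gumbelCDF, neg_sub]
        exact abs_exp_sub_exp_le (by linarith) (by linarith)
    _ = |exp (h - x) - exp (-x)| * exp (-m) := by rw [← abs_neg]; congr 2; ring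
    _ ≤ |h| * exp (b - x) * exp (-m) := by
        gcongr
        simpa using abs_exp_sub_exp_le (s := h - x) (t := -x) (b := b - x)
          (by linarith) (by linarith)
    _ = |h| * exp (b - x - m) := by rw [mul_assoc, ← exp_add, ← sub_eq_add_neg]

lemma one_add_sq_le_exp_quarter {y : ℝ} (hy : 0 ≤ y) : (1 + y) ^ 2 ≤ 64 * exp (y / 4) := by
  have hlin : 1 + y ≤ 8 * exp (y / 8) := by linarith [add_one_le_exp (y / 8)]
  calc (1 + y) ^ 2 ≤ (8 * exp (y / 8)) ^ 2 := by gcongr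
    _ = 64 * exp (y / 4) := by rw [mul_pow, ← exp_nat_mul]; push_cast; ring_nf

lemma two_lt_exp_two_sub_exp_one : 2 < exp 2 - exp 1 := by
  have hsq : exp 2 = exp 1 * exp 1 := by rw [← exp_add]; norm_num
  nlinarith [exp_one_gt_d9]

section GumbelShift

variable {h : ℝ → ℝ} {t C : ℝ}

lemma abs_gumbelCDF_sub_le_exp_neg_abs (ht : 0 ≤ t) (hconc : ConcaveOn ℝ univ h)
    (hconv : ConvexOn ℝ univ fun x ↦ h x + t * x ^ 2)
    (hexp : ConvexOn ℝ univ fun x ↦ exp (h x - x))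
    (hneg : |h (-1)| ≤ t * C) (hzero : |h 0| ≤ t * C) (hone : |h 1| ≤ t * C)
    (htC : t * C ≤ 1 / 4) (hslope : 2 ≤ exp (h (-2) + 2) - exp (h (-1) + 1)) (x : ℝ) :
    |gumbelCDF (x - h x) - gumbelCDF x| ≤ t * (64 * (C + 1) * exp 5 * exp (-(1 / 4) * |x|)) := by
  have hquad := abs_le_of_concaveOn_of_convexOn_add_sq ht hconc hconv hneg hzero hone x
  have hlin : h x ≤ 1 / 4 + |x| / 2 := by
    nlinarith [le_of_concaveOn_of_abs_le hconc hneg hzero hone x, abs_nonneg x]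
  have hsecant : 2 * (-2 - x) ≤ exp (h x - x) :=
    mul_sub_le_of_convexOn_of_nonneg hexp (fun _ ↦ (exp_pos _).le) zero_le_two
      (by norm_num : (-2 : ℝ) < -1) (by norm_num; linarith) x
  have hsecant_exp : 2 * (-2 - x) ≤ exp (-x) :=
    mul_sub_le_of_convexOn_of_nonneg (convexOn_exp.comp_linearMap (-LinearMap.id))
      (fun _ ↦ (exp_pos _).le) zero_le_two (by norm_num : (-2 : ℝ) < -1)
      (by norm_num; linarith [two_lt_exp_two_sub_exp_one]) x
  have hexponent : 1 / 4 + |x| / 2 - x - max 0 (2 * (-2 - x)) ≤ 5 - |x| / 2 := by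
    rcases abs_cases x with ⟨hx, -⟩ | ⟨hx, -⟩ <;> rw [hx]
    · linarith [le_max_left 0 (2 * (-2 - x))]
    · linarith [le_max_right 0 (2 * (-2 - x))]
  calc |gumbelCDF (x - h x) - gumbelCDF x|
      ≤ |h x| * exp (1 / 4 + |x| / 2 - x - max 0 (2 * (-2 - x))) :=
        abs_gumbelCDF_sub_le (by positivity) hlin (max_le (exp_pos _).le hsecant_exp)
          (max_le (exp_pos _).le hsecant)
    _ ≤ t * (C + 1) * (1 + |x|) ^ 2 * exp (5 - |x| / 2) := by
        gcongr
        exact (abs_nonneg _).trans hquad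
    _ ≤ t * (C + 1) * (64 * exp (|x| / 4)) * exp (5 - |x| / 2) := by
        have hC : 0 ≤ t * (C + 1) := by linarith [(abs_nonneg _).trans hzero]
        gcongr
        exact one_add_sq_le_exp_quarter (abs_nonneg x)
    _ = t * (64 * (C + 1) * exp 5 * exp (-(1 / 4) * |x|)) := by
        rw [show -(1 / 4) * |x| = |x| / 4 + -(|x| / 2) by ring, sub_eq_add_neg, exp_add, exp_add]
        ring

end GumbelShift

lemma integrable_exp_neg_mul_abs {c : ℝ} (hc : 0 < c) : Integrable fun x : ℝ ↦ exp (-c * |x|) := by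
  refine Integrable.of_integral_ne_zero ?_
  rw [integral_comp_abs (f := fun x ↦ exp (-c * x)), integral_exp_mul_Ioi (neg_lt_zero.2 hc)]
  simp [hc.ne']

lemma tendsto_sub_div_of_hasDerivAt {ι : Type*} {l : Filter ι} {f : ℝ → ℝ} {f' x v : ℝ}
    {t d : ι → ℝ} (hf : HasDerivAt f f' x) (ht : Tendsto t l (𝓝[≠] 0))
    (hd : Tendsto (fun i ↦ d i / t i) l (𝓝 v)) :
    Tendsto (fun i ↦ (f (x + d i) - f x) / t i) l (𝓝 (f' * v)) := by
  rw [tendsto_nhdsWithin_iff] at ht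
  have hd0 : Tendsto d l (𝓝 0) := by
    have hmul := ht.1.mul hd
    rw [zero_mul] at hmul
    refine hmul.congr' ?_
    filter_upwards [ht.2] with i hi
    exact mul_div_cancel₀ _ hi
  have hlim := hf.hasFDerivAt.hasFDerivWithinAt.lim (c := fun i ↦ (t i)⁻¹) hd0
    (Eventually.of_forall fun _ ↦ mem_univ _) (by simpa only [smul_eq_mul, inv_mul_eq_div] using hd)
  simpa [div_eq_inv_mul, mul_comm v] using hlim

section Asymptotics

variable {ι : Type*} {l : Filter ι} {t : ι → ℝ} {h : ι → ℝ → ℝ} {g : ℝ → ℝ}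

lemma tendsto_gumbelCDF_sub_div {x y : ℝ} {d : ι → ℝ} (ht : Tendsto t l (𝓝[>] 0))
    (hd : Tendsto (fun i ↦ d i / t i) l (𝓝 y)) :
    Tendsto (fun i ↦ |gumbelCDF (x - d i) - gumbelCDF x| / t i) l (𝓝 (|y| * gumbelPDF x)) := by
  have hlim := (tendsto_sub_div_of_hasDerivAt (d := fun i ↦ -d i) (hasDerivAt_gumbelCDF x)
    (ht.mono_right (nhdsGT_le_nhdsNE 0)) (by simpa only [neg_div] using hd.neg)).abs
  rw [abs_mul, abs_neg, gumbelPDF, abs_of_pos (exp_pos _), mul_comm] at hlim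
  refine hlim.congr' ?_
  filter_upwards [ht.eventually self_mem_nhdsWithin] with i hi
  rw [abs_div, abs_of_pos hi, ← sub_eq_add_neg]

lemma eventually_abs_gumbelCDF_sub_le (ht : Tendsto t l (𝓝[>] 0))
    (hconc : ∀ᶠ i in l, ConcaveOn ℝ univ (h i))
    (hconv : ∀ᶠ i in l, ConvexOn ℝ univ fun x ↦ h i x + t i * x ^ 2)
    (hexp : ∀ᶠ i in l, ConvexOn ℝ univ fun x ↦ exp (h i x - x))
    (hlim : ∀ x, Tendsto (fun i ↦ h i x / t i) l (𝓝 (g x))) :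
    ∃ M, ∀ᶠ i in l, ∀ x,
      |gumbelCDF (x - h i x) - gumbelCDF x| ≤ t i * (M * exp (-(1 / 4) * |x|)) := by
  obtain ⟨C, hC⟩ : ∃ C, ∀ x ∈ ({-1, 0, 1} : Set ℝ), |g x| < C := by
    refine ⟨|g (-1)| + |g 0| + |g 1| + 1, ?_⟩
    simp only [mem_insert_iff, mem_singleton_iff, forall_eq_or_imp, forall_eq]
    refine ⟨?_, ?_, ?_⟩ <;> linarith [abs_nonneg (g (-1)), abs_nonneg (g 0), abs_nonneg (g 1)]
  have hpos : ∀ᶠ i in l, 0 < t i := ht.eventually self_mem_nhdsWithin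
  have ht0 : Tendsto t l (𝓝 0) := ht.mono_right nhdsWithin_le_nhds
  have hbound {x : ℝ} (hx : x ∈ ({-1, 0, 1} : Set ℝ)) : ∀ᶠ i in l, |h i x| ≤ t i * C := by
    filter_upwards [(hlim x).abs.eventually_lt_const (hC x hx), hpos] with i hi hti
    rw [abs_div, abs_of_pos hti, div_lt_iff₀ hti] at hi
    linarith
  have hzero (x : ℝ) : Tendsto (fun i ↦ h i x) l (𝓝 0) := by
    have hmul := ht0.mul (hlim x)
    rw [zero_mul] at hmul
    exact hmul.congr' (hpos.mono fun i hi ↦ mul_div_cancel₀ _ hi.ne')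
  have hslope : ∀ᶠ i in l, 2 ≤ exp (h i (-2) + 2) - exp (h i (-1) + 1) := by
    have hcont := (((hzero (-2)).add_const 2).rexp).sub (((hzero (-1)).add_const 1).rexp)
    rw [zero_add, zero_add] at hcont
    exact hcont.eventually_const_le two_lt_exp_two_sub_exp_one
  have hsmall : ∀ᶠ i in l, t i * C ≤ 1 / 4 := by
    have hmul := ht0.mul_const C
    rw [zero_mul] at hmul
    exact hmul.eventually_le_const (by norm_num)
  refine ⟨64 * (C + 1) * exp 5, ?_⟩
  filter_upwards [hpos, hconc, hconv, hexp, hbound (x := -1) (by simp), hbound (x := 0) (by simp),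
    hbound (x := 1) (by simp), hsmall, hslope]
    with i hpos hconc hconv hexp hneg hzero hone hsmall hslope
  exact abs_gumbelCDF_sub_le_exp_neg_abs hpos.le hconc hconv hexp hneg hzero hone hsmall hslope

theorem tendsto_integral_abs_gumbelCDF_sub_div [l.IsCountablyGenerated]
    (ht : Tendsto t l (𝓝[>] 0)) (hconc : ∀ᶠ i in l, ConcaveOn ℝ univ (h i))
    (hconv : ∀ᶠ i in l, ConvexOn ℝ univ fun x ↦ h i x + t i * x ^ 2)
    (hexp : ∀ᶠ i in l, ConvexOn ℝ univ fun x ↦ exp (h i x - x))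
    (hlim : ∀ x, Tendsto (fun i ↦ h i x / t i) l (𝓝 (g x))) :
    Tendsto (fun i ↦ (∫ x, |gumbelCDF (x - h i x) - gumbelCDF x|) / t i) l
      (𝓝 (∫ x, |g x| * gumbelPDF x)) := by
  obtain ⟨M, hM⟩ := eventually_abs_gumbelCDF_sub_le ht hconc hconv hexp hlim
  simp only [← integral_div]
  refine tendsto_integral_filter_of_dominated_convergence (fun x ↦ M * exp (-(1 / 4) * |x|))
    ?_ ?_ ((integrable_exp_neg_mul_abs (by norm_num)).const_mul M)
    (ae_of_all _ fun x ↦ tendsto_gumbelCDF_sub_div ht (hlim x))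
  · filter_upwards [hconc] with i hi
    have hcont : Continuous (h i) := continuousOn_univ.1 (hi.continuousOn isOpen_univ)
    have hdiff : Continuous fun x ↦ |gumbelCDF (x - h i x) - gumbelCDF x| / t i :=
      ((continuous_gumbelCDF.comp (continuous_id.sub hcont)).sub
        continuous_gumbelCDF).abs.div_const _
    exact hdiff.aestronglyMeasurable
  · filter_upwards [hM, ht.eventually self_mem_nhdsWithin] with i hi hti
    refine ae_of_all _ fun x ↦ ?_
    rw [norm_of_nonneg (div_nonneg (abs_nonneg _) (le_of_lt hti)), div_le_iff₀' hti]
    exact hi x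

end Asymptotics

/-! ### The first absolute moment of the Gumbel law -/

lemma integral_log_mul_exp_neg :
    ∫ t in Ioi (0 : ℝ), log t * exp (-t) = -eulerMascheroniConstant := by
  have hderiv : HasDerivAt Complex.Gamma
      (∫ t : ℝ in Ioi 0, (t : ℂ) ^ ((1 : ℂ) - 1) * (log t * exp (-t))) 1 := by
    refine (Complex.hasDerivAt_GammaIntegral (s := 1) (by simp)).congr_of_eventuallyEq ?_
    filter_upwards [(isOpen_lt continuous_const Complex.continuous_re).mem_nhds
      (show (0 : ℝ) < (1 : ℂ).re by simp)] with s hs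
    exact Complex.Gamma_eq_integral hs
  have hcast : ∫ t : ℝ in Ioi 0, (t : ℂ) ^ ((1 : ℂ) - 1) * (log t * exp (-t)) =
      ((∫ t in Ioi (0 : ℝ), log t * exp (-t) : ℝ) : ℂ) := by
    rw [← integral_complex_ofReal]
    simp
  exact_mod_cast hcast.symm.trans (hderiv.unique Complex.hasDerivAt_Gamma_one)

lemma integrableOn_log_mul_exp_neg : IntegrableOn (fun t ↦ log t * exp (-t)) (Ioi 0) := by
  refine Integrable.of_integral_ne_zero ?_
  rw [integral_log_mul_exp_neg]
  linarith [one_half_lt_eulerMascheroniConstant]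

lemma integrableOn_exp_neg_div : IntegrableOn (fun t : ℝ ↦ exp (-t) / t) (Ioi 1) := by
  refine Integrable.mono' (integrableOn_exp_neg_Ioi 1)
    (by fun_prop : Measurable fun t : ℝ ↦ exp (-t) / t).aestronglyMeasurable ?_
  refine ae_restrict_of_forall_mem measurableSet_Ioi fun t ht ↦ ?_
  have ht0 : 0 < t := one_pos.trans ht
  rw [norm_of_nonneg (by positivity)]
  exact div_le_self (exp_pos _).le (le_of_lt ht)

lemma tendsto_log_mul_exp_neg_atTop : Tendsto (fun t ↦ log t * exp (-t)) atTop (𝓝 0) := by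
  have hlim := isLittleO_log_id_atTop.tendsto_div_nhds_zero.mul
    (tendsto_pow_mul_exp_neg_atTop_nhds_zero 1)
  rw [zero_mul] at hlim
  refine hlim.congr' ?_
  filter_upwards [eventually_ne_atTop 0] with t ht
  rw [id, pow_one]
  field_simp

lemma integral_Ioi_one_log_mul_exp_neg : ∫ t in Ioi (1 : ℝ), log t * exp (-t) = -EiNegOne := by
  have hint : IntegrableOn (fun t ↦ log t * exp (-t)) (Ioi 1) :=
    integrableOn_log_mul_exp_neg.mono_set (Ioi_subset_Ioi zero_le_one)
  have hderiv (t : ℝ) (ht : t ∈ Ici 1) : HasDerivAt (fun t ↦ -(log t * exp (-t)))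
      (log t * exp (-t) - exp (-t) / t) t :=
    ((hasDerivAt_log (zero_lt_one.trans_le ht).ne').mul
      (hasDerivAt_neg t).exp).neg.congr_deriv (by ring)
  have hparts := integral_Ioi_of_hasDerivAt_of_tendsto' hderiv (hint.sub integrableOn_exp_neg_div)
    (by simpa using tendsto_log_mul_exp_neg_atTop.neg)
  rw [integral_sub hint integrableOn_exp_neg_div, log_one, zero_mul, neg_zero, sub_zero] at hparts
  rw [EiNegOne, neg_neg, sub_eq_zero.1 hparts]

lemma integral_abs_log_mul_exp_neg :
    ∫ t in Ioi (0 : ℝ), |log t| * exp (-t) = eulerMascheroniConstant - 2 * EiNegOne := by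
  have hsplit : ∀ t ∈ Ioi (0 : ℝ), |log t| * exp (-t) =
      2 * (Ioi 1).indicator (fun t ↦ log t * exp (-t)) t - log t * exp (-t) := by
    intro t ht
    by_cases h1 : 1 < t
    · rw [indicator_of_mem (mem_Ioi.2 h1), abs_of_pos (log_pos h1)]
      ring
    · rw [indicator_of_notMem (notMem_Ioi.2 (le_of_not_gt h1)),
        abs_of_nonpos (log_nonpos (le_of_lt ht) (le_of_not_gt h1))]
      ring
  rw [setIntegral_congr_fun measurableSet_Ioi hsplit,
    integral_sub ((integrableOn_log_mul_exp_neg.integrable.indicator measurableSet_Ioi).const_mul 2)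
      integrableOn_log_mul_exp_neg,
    integral_const_mul, setIntegral_indicator measurableSet_Ioi, Ioi_inter_Ioi,
    sup_eq_right.2 zero_le_one, integral_Ioi_one_log_mul_exp_neg, integral_log_mul_exp_neg]
  ring

theorem integral_abs_mul_gumbelPDF :
    ∫ x, |x| * gumbelPDF x = eulerMascheroniConstant - 2 * EiNegOne := by
  have hderiv (x : ℝ) : HasDerivAt (fun x ↦ exp (-x)) (-exp (-x)) x :=
    (hasDerivAt_neg x).exp.congr_deriv (by ring)
  have hinj : Function.Injective fun x : ℝ ↦ exp (-x) := exp_injective.comp neg_injective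
  have himage : (fun x : ℝ ↦ exp (-x)) '' univ = Ioi 0 := by
    rw [image_univ, ← range_exp]
    exact neg_surjective.range_comp exp
  have hsubst := integral_image_eq_integral_abs_deriv_smul MeasurableSet.univ
    (fun x _ ↦ (hderiv x).hasDerivWithinAt) hinj.injOn fun t ↦ |log t| * exp (-t)
  rw [himage, integral_abs_log_mul_exp_neg, setIntegral_univ] at hsubst
  rw [hsubst]
  congr 1 with x
  rw [log_exp, abs_neg, abs_neg, abs_of_pos (exp_pos _), smul_eq_mul, gumbelPDF, sub_eq_add_neg,
    exp_add]
  ring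

lemma eiNegOne_nonpos : EiNegOne ≤ 0 :=
  neg_nonpos.2 <| setIntegral_nonneg measurableSet_Ioi fun _ ht ↦
    div_nonneg (exp_pos _).le (zero_le_one.trans (le_of_lt ht))

/-! ### Tails of log-concave densities -/

/-- `Q` is the tail `x ↦ ∫ r` over `[x, ∞)` of a positive density `r = exp (-V)` with
`0 ≤ V'' ≤ 1`. The derivatives `w = V'` and `w' = V''` enter only through the differential equations
they satisfy, so that `Q` may in turn be the density of a further tail. -/
structure IsLogConcaveTail (Q r w w' : ℝ → ℝ) : Prop where
  hasDerivAt_tail : ∀ x, HasDerivAt Q (-r x) x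
  hasDerivAt_density : ∀ x, HasDerivAt r (-(w x * r x)) x
  hasDerivAt_slope : ∀ x, HasDerivAt w (w' x) x
  curvature_nonneg : ∀ x, 0 ≤ w' x
  curvature_le_one : ∀ x, w' x ≤ 1
  density_pos : ∀ x, 0 < r x
  tendsto_tail : Tendsto Q atTop (𝓝 0)
  tendsto_density : Tendsto r atTop (𝓝 0)
  tendsto_slope_mul_density : Tendsto (fun x ↦ w x * r x) atTop (𝓝 0)

namespace IsLogConcaveTail

variable {Q r w w' : ℝ → ℝ} (hQ : IsLogConcaveTail Q r w w')

include hQ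

lemma tail_pos (x : ℝ) : 0 < Q x := by
  have hanti : StrictAnti Q :=
    strictAnti_of_hasDerivAt_neg hQ.hasDerivAt_tail fun x ↦ neg_lt_zero.2 (hQ.density_pos x)
  exact (hanti.antitone.le_of_tendsto hQ.tendsto_tail (x + 1)).trans_lt (hanti (lt_add_one x))

lemma monotone_slope : Monotone w :=
  monotone_of_hasDerivAt_nonneg hQ.hasDerivAt_slope hQ.curvature_nonneg

lemma slope_mul_tail_le (x : ℝ) : w x * Q x ≤ r x := by
  have hderiv (v : ℝ) : HasDerivAt (fun v ↦ r v - w x * Q v) (-((w v - w x) * r v)) v :=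
    ((hQ.hasDerivAt_density v).sub ((hQ.hasDerivAt_tail v).const_mul (w x))).congr_deriv (by ring)
  have hanti : AntitoneOn (fun v ↦ r v - w x * Q v) (Ici x) := by
    refine antitoneOn_of_deriv_nonpos (convex_Ici x)
      (fun v _ ↦ (hderiv v).continuousAt.continuousWithinAt)
      (fun v _ ↦ (hderiv v).differentiableAt.differentiableWithinAt) fun v hv ↦ ?_
    rw [interior_Ici] at hv
    rw [(hderiv v).deriv, neg_nonpos]
    exact mul_nonneg (sub_nonneg.2 (hQ.monotone_slope (le_of_lt hv))) (hQ.density_pos v).le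
  have hlim : Tendsto (fun v ↦ r v - w x * Q v) atTop (𝓝 0) := by
    simpa using hQ.tendsto_density.sub (hQ.tendsto_tail.const_mul (w x))
  refine sub_nonneg.1 (le_of_tendsto hlim ?_)
  filter_upwards [eventually_ge_atTop x] with v hv
  exact hanti self_mem_Ici hv hv

/-- The left-hand side has derivative `r * (w' - 1 - (w - m) ^ 2) ≤ 0` and vanishes at infinity. -/
lemma tail_density_combination_nonneg (m x : ℝ) : 0 ≤ (1 + m ^ 2) * Q x + (w x - 2 * m) * r x := by
  have hderiv (v : ℝ) : HasDerivAt (fun v ↦ (1 + m ^ 2) * Q v + (w v - 2 * m) * r v)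
      (r v * (w' v - 1 - (w v - m) ^ 2)) v :=
    (((hQ.hasDerivAt_tail v).const_mul (1 + m ^ 2)).add (((hQ.hasDerivAt_slope v).sub_const
      (2 * m)).mul (hQ.hasDerivAt_density v))).congr_deriv (by ring)
  have hanti : Antitone fun v ↦ (1 + m ^ 2) * Q v + (w v - 2 * m) * r v :=
    antitone_of_hasDerivAt_nonpos hderiv fun v ↦
      mul_nonpos_of_nonneg_of_nonpos (hQ.density_pos v).le
        (by nlinarith [hQ.curvature_le_one v, sq_nonneg (w v - m)])
  refine hanti.le_of_tendsto ?_ x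
  have hlim := (hQ.tendsto_tail.const_mul (1 + m ^ 2)).add
    (hQ.tendsto_slope_mul_density.sub (hQ.tendsto_density.const_mul (2 * m)))
  simpa only [mul_zero, sub_zero, add_zero, ← sub_mul] using hlim

lemma slope_mul_density_le (x : ℝ) : w x * r x ≤ (1 + w x ^ 2) * Q x := by
  linarith [hQ.tail_density_combination_nonneg (w x) x]

lemma density_sq_le (x : ℝ) : r x ^ 2 ≤ Q x ^ 2 + w x * r x * Q x := by
  have hpos := hQ.tail_pos x
  have h := mul_nonneg (hQ.tail_density_combination_nonneg (r x / Q x) x) hpos.le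
  field_simp at h
  linarith

lemma hasDerivAt_hazard (x : ℝ) :
    HasDerivAt (fun x ↦ r x / Q x) ((r x ^ 2 - w x * r x * Q x) / Q x ^ 2) x :=
  ((hQ.hasDerivAt_density x).div (hQ.hasDerivAt_tail x) (hQ.tail_pos x).ne').congr_deriv (by ring)

lemma monotone_hazard : Monotone fun x ↦ r x / Q x :=
  monotone_of_hasDerivAt_nonneg hQ.hasDerivAt_hazard fun x ↦
    div_nonneg (by nlinarith [hQ.slope_mul_tail_le x, hQ.density_pos x]) (sq_nonneg _)

lemma monotone_sub_hazard : Monotone fun x ↦ x - r x / Q x :=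
  monotone_of_hasDerivAt_nonneg (fun x ↦ (hasDerivAt_id x).sub (hQ.hasDerivAt_hazard x)) fun x ↦
    sub_nonneg.2 <| div_le_one_of_le₀ (by linarith [hQ.density_sq_le x]) (sq_nonneg _)

lemma hasDerivAt_log_tail (x : ℝ) : HasDerivAt (fun x ↦ log (Q x)) (-(r x / Q x)) x :=
  ((hQ.hasDerivAt_tail x).log (hQ.tail_pos x).ne').congr_deriv (neg_div _ _)

theorem concaveOn_log_tail : ConcaveOn ℝ univ fun x ↦ log (Q x) := by
  refine Antitone.concaveOn_univ_of_deriv (fun x ↦ (hQ.hasDerivAt_log_tail x).differentiableAt) ?_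
  rw [funext fun x ↦ (hQ.hasDerivAt_log_tail x).deriv]
  exact hQ.monotone_hazard.neg

theorem convexOn_log_tail_add_sq : ConvexOn ℝ univ fun x ↦ log (Q x) + x ^ 2 / 2 := by
  have hderiv (x : ℝ) : HasDerivAt (fun x ↦ log (Q x) + x ^ 2 / 2) (x - r x / Q x) x :=
    ((hQ.hasDerivAt_log_tail x).add ((hasDerivAt_pow 2 x).div_const 2)).congr_deriv
      (by push_cast; ring)
  refine Monotone.convexOn_univ_of_deriv (fun x ↦ (hderiv x).differentiableAt) ?_
  rw [funext fun x ↦ (hderiv x).deriv]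
  exact hQ.monotone_sub_hazard

end IsLogConcaveTail

/-! ### The standard normal distribution -/

lemma stdNormalPDF_eq_gaussianPDFReal : stdNormalPDF = gaussianPDFReal 0 1 := by
  ext x
  simp [stdNormalPDF, gaussianPDFReal, div_eq_inv_mul]

lemma stdNormalCDF_eq_integral (x : ℝ) : stdNormalCDF x = ∫ t in Iic x, stdNormalPDF t := rfl

lemma stdNormalCDF_eq_cdf (x : ℝ) : stdNormalCDF x = cdf (gaussianReal 0 1) x := by
  rw [cdf_eq_real, measureReal_def, gaussianReal_apply_eq_integral _ one_ne_zero,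
    ENNReal.toReal_ofReal (integral_nonneg fun _ ↦ gaussianPDFReal_nonneg _ _ _),
    stdNormalCDF_eq_integral, stdNormalPDF_eq_gaussianPDFReal]

lemma stdNormalPDF_pos (x : ℝ) : 0 < stdNormalPDF x := by
  unfold stdNormalPDF
  positivity

lemma stdNormalPDF_neg (x : ℝ) : stdNormalPDF (-x) = stdNormalPDF x := by
  simp only [stdNormalPDF, neg_sq]

lemma integrable_stdNormalPDF : Integrable stdNormalPDF :=
  stdNormalPDF_eq_gaussianPDFReal ▸ integrable_gaussianPDFReal 0 1

lemma integral_stdNormalPDF : ∫ x, stdNormalPDF x = 1 :=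
  stdNormalPDF_eq_gaussianPDFReal ▸ integral_gaussianPDFReal_eq_one 0 one_ne_zero

lemma hasDerivAt_stdNormalPDF (x : ℝ) : HasDerivAt stdNormalPDF (-(x * stdNormalPDF x)) x := by
  have hexponent : HasDerivAt (fun x : ℝ ↦ -x ^ 2 / 2) (-x) x :=
    ((hasDerivAt_pow 2 x).neg.div_const 2).congr_deriv (by push_cast; ring)
  exact (hexponent.exp.div_const _).congr_deriv (by rw [stdNormalPDF]; ring)

lemma hasDerivAt_stdNormalCDF (x : ℝ) : HasDerivAt stdNormalCDF (stdNormalPDF x) x := by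
  have hsplit : stdNormalCDF = fun u ↦ stdNormalCDF 0 + ∫ t in (0 : ℝ)..u, stdNormalPDF t := by
    ext u
    simp only [stdNormalCDF_eq_integral]
    rw [← intervalIntegral.integral_Iic_sub_Iic integrable_stdNormalPDF.integrableOn
      integrable_stdNormalPDF.integrableOn]
    ring
  have hcont : Continuous stdNormalPDF :=
    continuous_iff_continuousAt.2 fun x ↦ (hasDerivAt_stdNormalPDF x).continuousAt
  rw [hsplit]
  exact (intervalIntegral.integral_hasDerivAt_right integrable_stdNormalPDF.intervalIntegrable
    (hcont.stronglyMeasurableAtFilter _ _) hcont.continuousAt).const_add _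

lemma stdNormalCDF_neg (x : ℝ) : stdNormalCDF (-x) = 1 - stdNormalCDF x := by
  have hreflect := integral_comp_neg_Iic (-x) stdNormalPDF
  simp only [stdNormalPDF_neg, neg_neg] at hreflect
  rw [stdNormalCDF_eq_integral, hreflect, ← integral_stdNormalPDF, stdNormalCDF_eq_integral,
    ← intervalIntegral.integral_Iic_add_Ioi (b := x) integrable_stdNormalPDF.integrableOn
      integrable_stdNormalPDF.integrableOn, add_sub_cancel_left]

lemma tendsto_stdNormalCDF_atTop : Tendsto stdNormalCDF atTop (𝓝 1) := by
  rw [funext stdNormalCDF_eq_cdf]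
  exact tendsto_cdf_atTop _

lemma tendsto_mul_stdNormalPDF_atTop : Tendsto (fun x ↦ x * stdNormalPDF x) atTop (𝓝 0) := by
  have hlim := ((tendsto_rpow_abs_mul_exp_neg_mul_sq_cocompact (one_half_pos (α := ℝ)) 1).mono_left
    atTop_le_cocompact).div_const √(2 * π)
  rw [zero_div] at hlim
  refine hlim.congr' ?_
  filter_upwards [eventually_ge_atTop 0] with x hx
  rw [rpow_one, abs_of_nonneg hx, stdNormalPDF, mul_div_assoc]
  ring_nf

lemma tendsto_stdNormalPDF_atTop : Tendsto stdNormalPDF atTop (𝓝 0) := by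
  have hlim := tendsto_inv_atTop_zero.mul tendsto_mul_stdNormalPDF_atTop
  rw [zero_mul] at hlim
  refine hlim.congr' ?_
  filter_upwards [eventually_ne_atTop 0] with x hx
  exact inv_mul_cancel_left₀ hx _

lemma isLogConcaveTail_one_sub_stdNormalCDF :
    IsLogConcaveTail (fun x ↦ 1 - stdNormalCDF x) stdNormalPDF id (fun _ ↦ 1) where
  hasDerivAt_tail x := (hasDerivAt_stdNormalCDF x).const_sub 1
  hasDerivAt_density := hasDerivAt_stdNormalPDF
  hasDerivAt_slope := hasDerivAt_id
  curvature_nonneg _ := zero_le_one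
  curvature_le_one _ := le_rfl
  density_pos := stdNormalPDF_pos
  tendsto_tail := by simpa using tendsto_stdNormalCDF_atTop.const_sub 1
  tendsto_density := tendsto_stdNormalPDF_atTop
  tendsto_slope_mul_density := tendsto_mul_stdNormalPDF_atTop

lemma stdNormalCDF_lt_one (x : ℝ) : stdNormalCDF x < 1 :=
  sub_pos.1 (isLogConcaveTail_one_sub_stdNormalCDF.tail_pos x)

lemma stdNormalCDF_pos (x : ℝ) : 0 < stdNormalCDF x := by
  linarith [stdNormalCDF_neg x, stdNormalCDF_lt_one (-x)]

lemma neg_mul_stdNormalCDF_le (x : ℝ) : -x * stdNormalCDF x ≤ stdNormalPDF x := by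
  simpa [stdNormalCDF_neg, stdNormalPDF_neg] using
    isLogConcaveTail_one_sub_stdNormalCDF.slope_mul_tail_le (-x)

lemma stdNormalPDF_sq_le (x : ℝ) :
    stdNormalPDF x ^ 2 ≤ stdNormalCDF x ^ 2 - x * stdNormalPDF x * stdNormalCDF x := by
  simpa [stdNormalCDF_neg, stdNormalPDF_neg, sub_eq_add_neg] using
    isLogConcaveTail_one_sub_stdNormalCDF.density_sq_le (-x)

/-- The logarithmic derivative `φ / Φ` of the standard normal distribution function. -/
noncomputable def stdNormalRevHazard (x : ℝ) : ℝ := stdNormalPDF x / stdNormalCDF x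

lemma hasDerivAt_stdNormalRevHazard (x : ℝ) : HasDerivAt stdNormalRevHazard
    (-((x + stdNormalRevHazard x) * stdNormalRevHazard x)) x := by
  have hpos := stdNormalCDF_pos x
  refine ((hasDerivAt_stdNormalPDF x).div (hasDerivAt_stdNormalCDF x) hpos.ne').congr_deriv ?_
  rw [stdNormalRevHazard]
  field_simp
  ring

lemma stdNormalRevHazard_pos (x : ℝ) : 0 < stdNormalRevHazard x :=
  div_pos (stdNormalPDF_pos x) (stdNormalCDF_pos x)

lemma add_stdNormalRevHazard_nonneg (x : ℝ) : 0 ≤ x + stdNormalRevHazard x := by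
  rw [stdNormalRevHazard, ← neg_le_iff_add_nonneg', le_div_iff₀ (stdNormalCDF_pos x)]
  exact neg_mul_stdNormalCDF_le x

lemma add_mul_stdNormalRevHazard_le_one (x : ℝ) :
    (x + stdNormalRevHazard x) * stdNormalRevHazard x ≤ 1 := by
  have hpos := stdNormalCDF_pos x
  have hsq := stdNormalPDF_sq_le x
  rw [stdNormalRevHazard]
  field_simp
  linarith

lemma tendsto_mul_stdNormalRevHazard_atTop :
    Tendsto (fun x ↦ x * stdNormalRevHazard x) atTop (𝓝 0) := by
  have hlim := tendsto_mul_stdNormalPDF_atTop.div tendsto_stdNormalCDF_atTop one_ne_zero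
  rw [zero_div] at hlim
  exact hlim.congr fun x ↦ mul_div_assoc _ _ _

lemma tendsto_stdNormalRevHazard_atTop : Tendsto stdNormalRevHazard atTop (𝓝 0) :=
  zero_div (1 : ℝ) ▸ tendsto_stdNormalPDF_atTop.div tendsto_stdNormalCDF_atTop one_ne_zero

lemma isLogConcaveTail_neg_log_stdNormalCDF :
    IsLogConcaveTail (fun x ↦ -log (stdNormalCDF x)) stdNormalRevHazard
      (fun x ↦ x + stdNormalRevHazard x)
      (fun x ↦ 1 - (x + stdNormalRevHazard x) * stdNormalRevHazard x) where
  hasDerivAt_tail x := ((hasDerivAt_stdNormalCDF x).log (stdNormalCDF_pos x).ne').neg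
  hasDerivAt_density := hasDerivAt_stdNormalRevHazard
  hasDerivAt_slope x := (hasDerivAt_id x).add (hasDerivAt_stdNormalRevHazard x)
  curvature_nonneg x := sub_nonneg.2 (add_mul_stdNormalRevHazard_le_one x)
  curvature_le_one x := sub_le_self _
    (mul_nonneg (add_stdNormalRevHazard_nonneg x) (stdNormalRevHazard_pos x).le)
  density_pos := stdNormalRevHazard_pos
  tendsto_tail := by simpa using (tendsto_stdNormalCDF_atTop.log one_ne_zero).neg
  tendsto_density := tendsto_stdNormalRevHazard_atTop
  tendsto_slope_mul_density := by
    simpa [add_mul] using tendsto_mul_stdNormalRevHazard_atTop.add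
      (tendsto_stdNormalRevHazard_atTop.mul tendsto_stdNormalRevHazard_atTop)

lemma mul_neg_log_stdNormalCDF_le (x : ℝ) :
    x * -log (stdNormalCDF x) ≤ stdNormalPDF x := by
  have hpos := stdNormalCDF_pos x
  have hmills : x * (1 - stdNormalCDF x) ≤ stdNormalPDF x :=
    isLogConcaveTail_one_sub_stdNormalCDF.slope_mul_tail_le x
  have htail := isLogConcaveTail_neg_log_stdNormalCDF.slope_mul_tail_le x
  rw [stdNormalRevHazard, le_div_iff₀ hpos] at htail
  calc x * -log (stdNormalCDF x)
      ≤ (x * stdNormalCDF x + stdNormalPDF x) * -log (stdNormalCDF x) := by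
        gcongr
        · exact (isLogConcaveTail_neg_log_stdNormalCDF.tail_pos x).le
        · linarith
    _ = (x + stdNormalPDF x / stdNormalCDF x) * -log (stdNormalCDF x) * stdNormalCDF x := by
        field_simp
    _ ≤ stdNormalPDF x := htail

lemma mul_stdNormalPDF_le_mul_neg_log_stdNormalCDF (x : ℝ) :
    x * stdNormalPDF x ≤ (1 + x ^ 2) * -log (stdNormalCDF x) := by
  calc x * stdNormalPDF x ≤ (1 + x ^ 2) * (1 - stdNormalCDF x) :=
        isLogConcaveTail_one_sub_stdNormalCDF.slope_mul_density_le x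
    _ ≤ (1 + x ^ 2) * -log (stdNormalCDF x) := by
        gcongr
        linarith [log_le_sub_one_of_pos (stdNormalCDF_pos x)]

lemma log_stdNormalPDF (x : ℝ) : log (stdNormalPDF x) = -x ^ 2 / 2 - log √(2 * π) := by
  rw [stdNormalPDF, log_div (exp_ne_zero _) (by positivity), log_exp]

/-- The logarithmic error of Mills' approximation `φ x / x` to `-log (Φ x)`, for `x > 0`. -/
noncomputable def logMillsError (x : ℝ) : ℝ :=
  log (-log (stdNormalCDF x)) - log (stdNormalPDF x / x)

lemma abs_logMillsError_le {x : ℝ} (hx : 0 < x) : |logMillsError x| ≤ 1 / x ^ 2 := by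
  have htail := isLogConcaveTail_neg_log_stdNormalCDF.tail_pos x
  have hratio : 0 < stdNormalPDF x / x := div_pos (stdNormalPDF_pos x) hx
  have hupper : log (-log (stdNormalCDF x)) ≤ log (stdNormalPDF x / x) :=
    log_le_log htail ((le_div_iff₀' hx).2 (mul_neg_log_stdNormalCDF_le x))
  have hlower : log (stdNormalPDF x / x) ≤ log (-log (stdNormalCDF x)) + 1 / x ^ 2 :=
    calc log (stdNormalPDF x / x)
        ≤ log ((1 + 1 / x ^ 2) * -log (stdNormalCDF x)) := by
          refine log_le_log hratio ?_
          have := mul_stdNormalPDF_le_mul_neg_log_stdNormalCDF x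
          field_simp
          linarith
      _ = log (-log (stdNormalCDF x)) + log (1 + 1 / x ^ 2) := by
          rw [log_mul (by positivity) htail.ne', add_comm]
      _ ≤ log (-log (stdNormalCDF x)) + 1 / x ^ 2 := by
          gcongr
          linarith [log_le_sub_one_of_pos (show 0 < 1 + 1 / x ^ 2 by positivity)]
  rw [logMillsError, abs_le]
  constructor <;> linarith [show 0 ≤ 1 / x ^ 2 by positivity]

lemma concaveOn_log_stdNormalCDF : ConcaveOn ℝ univ fun x ↦ log (stdNormalCDF x) := by
  have hreflect :=
    isLogConcaveTail_one_sub_stdNormalCDF.concaveOn_log_tail.comp_linearMap (-LinearMap.id)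
  refine hreflect.congr fun x _ ↦ ?_
  simp [stdNormalCDF_neg]

/-! ### The normal maximum as a perturbed Gumbel law -/

/-- The order `c_n / a_n ^ 2` of the distance between the law of `Y_n` and the Gumbel law. -/
noncomputable def gumbelRate (n : ℕ) : ℝ := cSeq n / aSeq n ^ 2

/-- The number `s` such that `b_n + x / a_n = a_n + s / a_n`, when `a_n ≠ 0`. -/
noncomputable def normingOffset (n : ℕ) (x : ℝ) : ℝ :=
  x - cSeq n - (cSeq n ^ 2 - 2 * cSeq n) / (2 * aSeq n ^ 2)

/-- The displacement `H_n` for which `Φ(b_n + x / a_n) ^ n = Λ(x - H_n x)`, when `n ≠ 0`. -/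
noncomputable def gumbelShift (n : ℕ) (x : ℝ) : ℝ :=
  log (n * -log (stdNormalCDF (bSeq3 n + x / aSeq n))) + x

lemma neg_log_stdNormalCDF_pos (x : ℝ) : 0 < -log (stdNormalCDF x) :=
  isLogConcaveTail_neg_log_stdNormalCDF.tail_pos x

lemma exp_gumbelShift_sub {n : ℕ} (hn : n ≠ 0) (x : ℝ) :
    exp (gumbelShift n x - x) = n * -log (stdNormalCDF (bSeq3 n + x / aSeq n)) := by
  rw [gumbelShift, add_sub_cancel_right, exp_log]
  have := neg_log_stdNormalCDF_pos (bSeq3 n + x / aSeq n)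
  positivity

lemma stdNormalCDF_pow_eq_gumbelCDF {n : ℕ} (hn : n ≠ 0) (x : ℝ) :
    stdNormalCDF (bSeq3 n + x / aSeq n) ^ n = gumbelCDF (x - gumbelShift n x) := by
  rw [gumbelCDF, neg_sub, exp_gumbelShift_sub hn, mul_neg, neg_neg, exp_nat_mul,
    exp_log (stdNormalCDF_pos _)]

lemma gumbelShift_eq_log_add {n : ℕ} (hn : n ≠ 0) (x : ℝ) :
    gumbelShift n x = log n + log (-log (stdNormalCDF (bSeq3 n + x / aSeq n))) + x := by
  rw [gumbelShift, log_mul (Nat.cast_ne_zero.2 hn) (neg_log_stdNormalCDF_pos _).ne']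

section Convexity

lemma convexOn_comp_add_div {f : ℝ → ℝ} (hf : ConvexOn ℝ univ f) (a b : ℝ) :
    ConvexOn ℝ univ fun x ↦ f (b + x / a) := by
  refine (hf.comp_affineMap (AffineMap.lineMap b (b + a⁻¹))).congr fun x _ ↦ ?_
  simp [AffineMap.lineMap_apply, div_eq_mul_inv, add_comm]

lemma concaveOn_comp_add_div {f : ℝ → ℝ} (hf : ConcaveOn ℝ univ f) (a b : ℝ) :
    ConcaveOn ℝ univ fun x ↦ f (b + x / a) :=
  neg_convexOn_iff.1 (convexOn_comp_add_div hf.neg a b)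

variable {n : ℕ}

lemma convexOn_exp_gumbelShift_sub (hn : n ≠ 0) :
    ConvexOn ℝ univ fun x ↦ exp (gumbelShift n x - x) := by
  simp only [exp_gumbelShift_sub hn]
  exact (concaveOn_comp_add_div concaveOn_log_stdNormalCDF _ _).neg.smul n.cast_nonneg

lemma concaveOn_gumbelShift (hn : n ≠ 0) : ConcaveOn ℝ univ (gumbelShift n) := by
  have hlog := concaveOn_comp_add_div
    isLogConcaveTail_neg_log_stdNormalCDF.concaveOn_log_tail (aSeq n) (bSeq3 n)
  exact ((hlog.add_const (log n)).add (concaveOn_id convex_univ)).congr fun x _ ↦ by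
    simp [gumbelShift_eq_log_add hn, add_comm]

lemma convexOn_gumbelShift_add_sq (hn : n ≠ 0) (hc : 1 / 2 ≤ cSeq n) :
    ConvexOn ℝ univ fun x ↦ gumbelShift n x + gumbelRate n * x ^ 2 := by
  have hlog := convexOn_comp_add_div
    isLogConcaveTail_neg_log_stdNormalCDF.convexOn_log_tail_add_sq (aSeq n) (bSeq3 n)
  have hsq : ConvexOn ℝ univ fun x : ℝ ↦ ((cSeq n - 1 / 2) / aSeq n ^ 2) • x ^ 2 :=
    even_two.convexOn_pow.smul (div_nonneg (sub_nonneg.2 hc) (sq_nonneg _))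
  have hlin : ConvexOn ℝ univ fun x : ℝ ↦ (1 - bSeq3 n / aSeq n) * x :=
    ((1 - bSeq3 n / aSeq n) • (LinearMap.id : ℝ →ₗ[ℝ] ℝ)).convexOn convex_univ
  refine (((hlog.add hsq).add hlin).add_const (log n - bSeq3 n ^ 2 / 2)).congr fun x _ ↦ ?_
  simp only [Pi.add_apply, gumbelShift_eq_log_add hn, gumbelRate, smul_eq_mul]
  ring

end Convexity

section NormingSequences

lemma aSeq_sq (n : ℕ) : aSeq n ^ 2 = 2 * log n :=
  sq_sqrt (mul_nonneg zero_le_two (log_natCast_nonneg n))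

lemma cSeq_eq_log (n : ℕ) : cSeq n = log (√(2 * π) * aSeq n) := by
  rw [cSeq, aSeq, ← sqrt_mul (by positivity)]
  ring_nf

lemma tendsto_log_natCast_atTop : Tendsto (fun n : ℕ ↦ log n) atTop atTop :=
  tendsto_log_atTop.comp tendsto_natCast_atTop_atTop

lemma tendsto_aSeq_atTop : Tendsto aSeq atTop atTop :=
  tendsto_sqrt_atTop.comp (tendsto_log_natCast_atTop.const_mul_atTop two_pos)

lemma tendsto_sqrt_two_pi_mul_aSeq_atTop : Tendsto (fun n ↦ √(2 * π) * aSeq n) atTop atTop :=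
  tendsto_aSeq_atTop.const_mul_atTop (by positivity)

lemma tendsto_cSeq_atTop : Tendsto cSeq atTop atTop := by
  rw [funext cSeq_eq_log]
  exact tendsto_log_atTop.comp tendsto_sqrt_two_pi_mul_aSeq_atTop

lemma tendsto_cSeq_div_aSeq : Tendsto (fun n ↦ cSeq n / aSeq n) atTop (𝓝 0) := by
  have hlog : Tendsto (fun z ↦ log z / z) atTop (𝓝 0) :=
    isLittleO_log_id_atTop.tendsto_div_nhds_zero
  have hlim := (hlog.comp tendsto_sqrt_two_pi_mul_aSeq_atTop).const_mul √(2 * π)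
  rw [mul_zero] at hlim
  refine hlim.congr fun n ↦ ?_
  have : √(2 * π) ≠ 0 := by positivity
  rw [Function.comp_apply, ← cSeq_eq_log]
  field_simp

lemma tendsto_gumbelRate : Tendsto gumbelRate atTop (𝓝[>] 0) := by
  refine tendsto_nhdsWithin_iff.2 ⟨?_, ?_⟩
  · have hlim := tendsto_cSeq_div_aSeq.mul (tendsto_inv_atTop_zero.comp tendsto_aSeq_atTop)
    rw [mul_zero] at hlim
    refine hlim.congr fun n ↦ ?_
    rw [Function.comp_apply, gumbelRate, sq, ← div_eq_mul_inv, div_div]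
  · filter_upwards [tendsto_cSeq_atTop.eventually_gt_atTop 0,
      tendsto_aSeq_atTop.eventually_gt_atTop 0] with n hc ha
    exact div_pos hc (pow_pos ha 2)

lemma tendsto_normingOffset_add_cSeq (x : ℝ) :
    Tendsto (fun n ↦ normingOffset n x + cSeq n) atTop (𝓝 x) := by
  have hlim := (((tendsto_cSeq_div_aSeq.pow 2).div_const 2).sub
    (tendsto_gumbelRate.mono_right nhdsWithin_le_nhds)).const_sub x
  rw [zero_pow two_ne_zero, zero_div, sub_zero, sub_zero] at hlim
  refine hlim.congr fun n ↦ ?_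
  rw [normingOffset, gumbelRate]
  ring

lemma tendsto_cSeq_inv : Tendsto (fun n ↦ (cSeq n)⁻¹) atTop (𝓝 0) :=
  tendsto_inv_atTop_zero.comp tendsto_cSeq_atTop

lemma tendsto_normingOffset_div_cSeq (x : ℝ) :
    Tendsto (fun n ↦ normingOffset n x / cSeq n) atTop (𝓝 (-1)) := by
  have hlim := ((tendsto_normingOffset_add_cSeq x).mul tendsto_cSeq_inv).sub_const 1
  rw [mul_zero, zero_sub] at hlim
  refine hlim.congr' ?_
  filter_upwards [tendsto_cSeq_atTop.eventually_ne_atTop 0] with n hc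
  field_simp
  ring

end NormingSequences

section Expansion

variable {n : ℕ} {x : ℝ}

lemma bSeq3_add_div_aSeq (ha : aSeq n ≠ 0) :
    bSeq3 n + x / aSeq n = aSeq n * (1 + normingOffset n x / aSeq n ^ 2) := by
  rw [bSeq3, normingOffset]
  field_simp
  ring

lemma log_stdNormalPDF_div (ha : 0 < aSeq n) (hs : 0 < 1 + normingOffset n x / aSeq n ^ 2) :
    log (stdNormalPDF (bSeq3 n + x / aSeq n) / (bSeq3 n + x / aSeq n)) =
      (cSeq n ^ 2 - 2 * cSeq n - normingOffset n x ^ 2) / (2 * aSeq n ^ 2)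
        - log (1 + normingOffset n x / aSeq n ^ 2) - x - log n := by
  have hc : cSeq n = log √(2 * π) + log (aSeq n) := by
    rw [cSeq_eq_log, log_mul (by positivity) ha.ne']
  have hx : x = normingOffset n x + cSeq n + (cSeq n ^ 2 - 2 * cSeq n) / (2 * aSeq n ^ 2) := by
    rw [normingOffset]
    ring
  have hsq : -(aSeq n * (1 + normingOffset n x / aSeq n ^ 2)) ^ 2 / 2 =
      -log n - normingOffset n x - normingOffset n x ^ 2 / (2 * aSeq n ^ 2) := by
    rw [show log n = aSeq n ^ 2 / 2 by rw [aSeq_sq]; ring]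
    field_simp
    ring
  rw [bSeq3_add_div_aSeq ha.ne', log_div (stdNormalPDF_pos _).ne' (by positivity),
    log_stdNormalPDF, log_mul ha.ne' hs.ne', hsq]
  linear_combination hx + hc

lemma gumbelShift_eq_logMillsError_add (hn : n ≠ 0) (ha : 0 < aSeq n)
    (hs : 0 < 1 + normingOffset n x / aSeq n ^ 2) :
    gumbelShift n x = logMillsError (bSeq3 n + x / aSeq n) +
      ((cSeq n ^ 2 - 2 * cSeq n - normingOffset n x ^ 2) / (2 * aSeq n ^ 2)
        - log (1 + normingOffset n x / aSeq n ^ 2)) := by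
  rw [gumbelShift_eq_log_add hn, logMillsError, log_stdNormalPDF_div ha hs]
  ring

lemma tendsto_normingOffset_div_aSeq_sq (x : ℝ) :
    Tendsto (fun n ↦ normingOffset n x / aSeq n ^ 2) atTop (𝓝 0) := by
  have hlim := (tendsto_normingOffset_div_cSeq x).mul
    (tendsto_gumbelRate.mono_right nhdsWithin_le_nhds)
  rw [mul_zero] at hlim
  refine hlim.congr' ?_
  filter_upwards [tendsto_cSeq_atTop.eventually_ne_atTop 0] with n hc
  rw [gumbelRate]
  field_simp

lemma tendsto_sq_sub_normingOffset_sq_div_gumbelRate (x : ℝ) :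
    Tendsto (fun n ↦ (cSeq n ^ 2 - 2 * cSeq n - normingOffset n x ^ 2) / (2 * aSeq n ^ 2) /
      gumbelRate n) atTop (𝓝 (x - 1)) := by
  have hoffset := tendsto_normingOffset_add_cSeq x
  have hlim := (hoffset.sub_const 1).sub (((hoffset.pow 2).mul tendsto_cSeq_inv).div_const 2)
  rw [mul_zero, zero_div, sub_zero] at hlim
  refine hlim.congr' ?_
  filter_upwards [tendsto_cSeq_atTop.eventually_ne_atTop 0,
    tendsto_aSeq_atTop.eventually_ne_atTop 0] with n hc ha
  rw [gumbelRate]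
  field_simp
  ring

lemma tendsto_log_one_add_normingOffset_div_gumbelRate (x : ℝ) :
    Tendsto (fun n ↦ log (1 + normingOffset n x / aSeq n ^ 2) / gumbelRate n) atTop (𝓝 (-1)) := by
  have hlog : HasDerivAt log 1 1 := by simpa using hasDerivAt_log one_ne_zero
  have hlim := tendsto_sub_div_of_hasDerivAt (d := fun n ↦ normingOffset n x / aSeq n ^ 2)
    (v := -1) hlog (tendsto_gumbelRate.mono_right (nhdsGT_le_nhdsNE 0)) ?_
  · simpa using hlim
  · refine (tendsto_normingOffset_div_cSeq x).congr' ?_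
    filter_upwards [tendsto_aSeq_atTop.eventually_ne_atTop 0] with n ha
    rw [gumbelRate]
    field_simp

lemma tendsto_logMillsError_div_gumbelRate (x : ℝ) :
    Tendsto (fun n ↦ logMillsError (bSeq3 n + x / aSeq n) / gumbelRate n) atTop (𝓝 0) := by
  have hone := (tendsto_normingOffset_div_aSeq_sq x).const_add 1
  rw [add_zero] at hone
  have hbound := tendsto_cSeq_inv.div (hone.pow 2) (by norm_num)
  rw [zero_div] at hbound
  refine squeeze_zero_norm' ?_ hbound
  filter_upwards [tendsto_cSeq_atTop.eventually_gt_atTop 0,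
    tendsto_aSeq_atTop.eventually_gt_atTop 0, hone.eventually_const_lt one_pos] with n hc ha hs
  have hu : 0 < bSeq3 n + x / aSeq n := by
    rw [bSeq3_add_div_aSeq ha.ne']
    positivity
  rw [norm_eq_abs, abs_div, abs_of_pos (show 0 < gumbelRate n by unfold gumbelRate; positivity)]
  calc _ ≤ 1 / (bSeq3 n + x / aSeq n) ^ 2 / gumbelRate n := by
        gcongr
        · unfold gumbelRate; positivity
        · exact abs_logMillsError_le hu
    _ = (cSeq n)⁻¹ / (1 + normingOffset n x / aSeq n ^ 2) ^ 2 := by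
        rw [bSeq3_add_div_aSeq ha.ne', gumbelRate]
        field_simp

theorem tendsto_gumbelShift_div_gumbelRate (x : ℝ) :
    Tendsto (fun n ↦ gumbelShift n x / gumbelRate n) atTop (𝓝 x) := by
  have hlim := (tendsto_logMillsError_div_gumbelRate x).add
    ((tendsto_sq_sub_normingOffset_sq_div_gumbelRate x).sub
      (tendsto_log_one_add_normingOffset_div_gumbelRate x))
  rw [zero_add, sub_neg_eq_add, sub_add_cancel] at hlim
  refine hlim.congr' ?_
  filter_upwards [eventually_ne_atTop 0, tendsto_aSeq_atTop.eventually_gt_atTop 0,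
    (tendsto_normingOffset_div_aSeq_sq x).eventually_const_lt neg_one_lt_zero] with n hn ha hs
  rw [gumbelShift_eq_logMillsError_add hn ha (by linarith), ← sub_div, ← add_div]

end Expansion

theorem tendsto_integral_abs_stdNormalCDF_pow_sub_div :
    Tendsto (fun n : ℕ ↦ (∫ x, |stdNormalCDF (bSeq3 n + x / aSeq n) ^ n - gumbelCDF x|) /
      gumbelRate n) atTop (𝓝 (∫ x, |x| * gumbelPDF x)) := by
  have hne : ∀ᶠ n : ℕ in atTop, n ≠ 0 := eventually_ne_atTop 0
  refine (tendsto_integral_abs_gumbelCDF_sub_div tendsto_gumbelRate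
    (hne.mono fun n hn ↦ concaveOn_gumbelShift hn) ?_
    (hne.mono fun n hn ↦ convexOn_exp_gumbelShift_sub hn)
    tendsto_gumbelShift_div_gumbelRate).congr' ?_
  · filter_upwards [hne, tendsto_cSeq_atTop.eventually_ge_atTop (1 / 2)] with n hn hc
    exact convexOn_gumbelShift_add_sq hn hc
  · filter_upwards [hne] with n hn
    simp only [stdNormalCDF_pow_eq_gumbelCDF hn]

lemma tendsto_gumbelRate_div_log_log :
    Tendsto (fun n : ℕ ↦ gumbelRate n / (log (log n) / (4 * log n))) atTop (𝓝 1) := by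
  have hloglog : Tendsto (fun n : ℕ ↦ log (log n)) atTop atTop :=
    tendsto_log_atTop.comp tendsto_log_natCast_atTop
  have hlim := (hloglog.const_div_atTop (log (4 * π))).add_const 1
  rw [zero_add] at hlim
  refine hlim.congr' ?_
  filter_upwards [hloglog.eventually_gt_atTop 0,
    tendsto_log_natCast_atTop.eventually_gt_atTop 0] with n hloglogn hlogn
  rw [gumbelRate, aSeq_sq, cSeq, log_sqrt (by positivity), log_mul (by positivity) hlogn.ne']
  field_simp
  ring

end GumbelConvergence

/-- With the refined centering, `Y_n = a_n(X_{(n)} - b_n)` satisfies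
`W₁(L(Y_n), Λ) = ((γ - 2 Ei(-1)) log log n/(4 log n)) (1 + o(1))`. -/
theorem refined_w1 :
    Tendsto (fun n : ℕ =>
        (∫ x : ℝ, |stdNormalCDF (bSeq3 n + x / aSeq n) ^ n - Real.exp (-Real.exp (-x))|) /
          ((Real.eulerMascheroniConstant - 2 * EiNegOne) *
            Real.log (Real.log n) / (4 * Real.log n)))
      atTop (nhds 1) := by
  have hconst : eulerMascheroniConstant - 2 * EiNegOne ≠ 0 := by
    linarith [one_half_lt_eulerMascheroniConstant, eiNegOne_nonpos]
  have hdist := tendsto_integral_abs_stdNormalCDF_pow_sub_div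
  rw [integral_abs_mul_gumbelPDF] at hdist
  have hlim := (hdist.div_const (eulerMascheroniConstant - 2 * EiNegOne)).mul
    tendsto_gumbelRate_div_log_log
  rw [div_self hconst, one_mul] at hlim
  refine hlim.congr' ?_
  filter_upwards [tendsto_gumbelRate.eventually self_mem_nhdsWithin] with n hrate
  have : gumbelRate n ≠ 0 := ne_of_gt hrate
  simp only [gumbelCDF]
  field_simp
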